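/- Let s be a term over T_Σ(V), ⟨S,R⟩ a set of terms with restricted regular constraints with R = ⟨A,V,C,W,h⟩, and suppose s is determined at all non-variable positions of the terms in S. Let S_3 = {t ∈ S | t structurally subsumes s with respect to R}. Then every instance of ⟨{s},R⟩ that belongs to L(⟨S,R⟩) belongs to L(⟨S_3,R⟩); consequently L(⟨{s},R⟩) − L(⟨S,R⟩) = L(⟨{s},R⟩) − L(⟨S_3,R⟩). -/

import Mathlib

namespace RITRC

/-- Terms over a signature (symbols `F` with arities `ar`) with variables in `V`. -/
inductive Term (F : Type) (ar : F → ℕ) (V : Type) : Type where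
  | var : V → Term F ar V
  | app : (f : F) → (Fin (ar f) → Term F ar V) → Term F ar V

/-- Ground terms (terms without variables). -/
abbrev GTerm (F : Type) (ar : F → ℕ) : Type := Term F ar Empty

variable {F V V' Q : Type} {ar : F → ℕ}

/-- Applying a substitution to a term. -/
def Term.subst (φ : V → Term F ar V') : Term F ar V → Term F ar V'
  | .var x => φ x
  | .app f ts => .app f (fun i => (ts i).subst φ)

/-- The height of a term. -/
def Term.height : Term F ar V → ℕ
  | .var _ => 0
  | .app _ ts => Finset.univ.sup (fun i => (ts i).height + 1)

/-- The size of a term. -/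
def Term.size : Term F ar V → ℕ
  | .var _ => 1
  | .app _ ts => 1 + ∑ i, (ts i).size

/-- The subterm of a term at a position (a list of child indices), if it exists. -/
def Term.sub : Term F ar V → List ℕ → Option (Term F ar V)
  | t, [] => some t
  | .var _, _ :: _ => none
  | .app f ts, i :: p => if h : i < ar f then (ts ⟨i, h⟩).sub p else none

/-- The root symbol of a term: a function symbol or a variable. -/
def Term.rootSym : Term F ar V → F ⊕ V
  | .var x => .inr x
  | .app f _ => .inl f

/-- `p` is a position of `t`. -/
def Term.isPos (t : Term F ar V) (p : List ℕ) : Prop := t.sub p ≠ none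

/-- `p` is a variable position of `t`. -/
def Term.isVarPos (t : Term F ar V) (p : List ℕ) : Prop :=
  ∃ x, t.sub p = some (Term.var x)

/-- `p` is a non-variable position of `t`. -/
def Term.isNonVarPos (t : Term F ar V) (p : List ℕ) : Prop :=
  ∃ f ts, t.sub p = some (Term.app f ts)

/-- The variable `x` occurs in `t`. -/
def Term.varOccurs (t : Term F ar V) (x : V) : Prop :=
  ∃ p, t.sub p = some (Term.var x)

/-- The variable `x` occurs at least twice in `t`. -/
def Term.occursTwice (t : Term F ar V) (x : V) : Prop :=
  ∃ p q, p ≠ q ∧ t.sub p = some (Term.var x) ∧ t.sub q = some (Term.var x)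

/-- `t` is determined at position `p`: either `p` is a non-variable position
of `t`, or some prefix of `p` is labeled by a constant symbol. -/
def Term.determinedAt (t : Term F ar V) (p : List ℕ) : Prop :=
  t.isNonVarPos p ∨ ∃ p', p' <+: p ∧ ∃ f ts, t.sub p' = some (Term.app f ts) ∧ ar f = 0

/-- A deterministic tree automaton: at most one transition `f(q₁,…,qₖ) → q`
for every `f` and states `q₁,…,qₖ`. -/
structure DTA (F : Type) (ar : F → ℕ) (Q : Type) : Type where
  δ : (f : F) → (Fin (ar f) → Q) → Option Q

/-- Collect a family of optional values into an optional family. -/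
def allSome {n : ℕ} {α : Type} (g : Fin n → Option α) : Option (Fin n → α) :=
  if h : ∀ i, (g i).isSome then some (fun i => (g i).get (h i)) else none

/-- The state reached by `A` on a term, where variables are pre-assigned states by `C`. -/
def DTA.runC (A : DTA F ar Q) (C : V → Q) : Term F ar V → Option Q
  | .var x => some (C x)
  | .app f ts => (allSome (fun i => A.runC C (ts i))).bind (A.δ f)

/-- The state reached by `A` on a ground term. -/
def DTA.run (A : DTA F ar Q) : GTerm F ar → Option Q :=
  A.runC (fun x => x.elim)

/-- `L(A,q)`: the set of ground terms on which `A` reaches state `q`. -/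
def DTA.lang (A : DTA F ar Q) (q : Q) : Set (GTerm F ar) :=
  {t | A.run t = some q}

/-- `A` is complete. -/
def DTA.Complete (A : DTA F ar Q) : Prop :=
  ∀ (f : F) (qs : Fin (ar f) → Q), (A.δ f qs).isSome

/-- `A` is a 1-or-n DTA: each state has exactly one, or at least `n`, terms. -/
def DTA.OneOr (A : DTA F ar Q) (n : ℕ) : Prop :=
  ∀ q : Q, (A.lang q).encard = 1 ∨ (n : ℕ∞) ≤ (A.lang q).encard

/-- The number of transitions of a DTA. -/
noncomputable def DTA.numTrans [Fintype F] [Fintype Q] (A : DTA F ar Q) : ℕ :=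
  ∑ f : F, ∑ qs : Fin (ar f) → Q, if (A.δ f qs).isSome then 1 else 0

/-- A set of ground terms is regular if it is recognized by some (finite) DTA. -/
def IsRegular (L : Set (GTerm F ar)) : Prop :=
  ∃ (Q : Type) (_ : Fintype Q) (A : DTA F ar Q) (Facc : Set Q),
    L = {t | ∃ q ∈ Facc, A.run t = some q}

/-- A DTA bundled with its (finite) state type and accepting states. -/
structure NDTA (F : Type) (ar : F → ℕ) : Type 1 where
  Q : Type
  fin : Fintype Q
  A : DTA F ar Q
  acc : Set Q

/-- The language recognized by a bundled DTA. -/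
def NDTA.lang (N : NDTA F ar) : Set (GTerm F ar) :=
  {t | ∃ q ∈ N.acc, N.A.run t = some q}

/-- The size of a bundled DTA: number of states plus sum of sizes of transitions. -/
noncomputable def NDTA.size [Fintype F] (N : NDTA F ar) : ℕ :=
  letI := N.fin
  Fintype.card N.Q +
    ∑ f : F, ∑ qs : Fin (ar f) → N.Q, if (N.A.δ f qs).isSome then ar f + 2 else 0

/-- `L(⟨S,M⟩)`: the language of a set of terms `S` with regular constraints `M`. -/
def langM (S : Set (Term F ar V)) (M : V → NDTA F ar) : Set (GTerm F ar) :=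
  {t | ∃ s ∈ S, ∃ φ : V → GTerm F ar, (∀ x, φ x ∈ (M x).lang) ∧ t = s.subst φ}

/-- `L(⟨S,R⟩)` for a single regular constraint `R = ⟨A,C⟩`. -/
def langSingle (S : Set (Term F ar V)) (A : DTA F ar Q) (C : V → Q) :
    Set (GTerm F ar) :=
  {t | ∃ s ∈ S, ∃ φ : V → GTerm F ar, (∀ x, A.run (φ x) = some (C x)) ∧ t = s.subst φ}

/-- A restricted regular constraint `R = ⟨A,V,C,W,h⟩`. -/
structure RRC (F : Type) (ar : F → ℕ) (V Q : Type) : Type where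
  A : DTA F ar Q
  C : V → Q
  W : Set V
  hgt : ℕ

/-- A solution of a restricted regular constraint. -/
def RRC.IsSolution (R : RRC F ar V Q) (φ : V → GTerm F ar) : Prop :=
  (∀ x, R.A.run (φ x) = some (R.C x)) ∧ ∀ x ∈ R.W, (φ x).height ≤ R.hgt

/-- `L(⟨S,R⟩)` for a restricted regular constraint `R`. -/
def RRC.lang (R : RRC F ar V Q) (S : Set (Term F ar V)) : Set (GTerm F ar) :=
  {t | ∃ s ∈ S, ∃ φ, R.IsSolution φ ∧ t = s.subst φ}

/-- Renaming the variables of a term. -/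
def Term.rename (ρ : V → V') (t : Term F ar V) : Term F ar V' :=
  t.subst (fun x => Term.var (ρ x))

/-- `s` and `t` are structurally similar: `t` is obtained from `s` by an
injective variable renaming. -/
def StructSim (s : Term F ar V) (t : Term F ar V') : Prop :=
  ∃ ρ : V → V', Function.Injective ρ ∧ t = s.rename ρ

/-- `s` and `t` are structurally equal with respect to the state assignment `C`. -/
def StructEq (C : V → Q) (s t : Term F ar V) : Prop :=
  StructSim s t ∧
    ∀ p x y, s.sub p = some (Term.var x) → t.sub p = some (Term.var y) → C x = C y

/-- `s` is structurally subsumed by `t` (with respect to `A` and `C`). -/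
def StructSub (A : DTA F ar Q) (C : V → Q) (s t : Term F ar V) : Prop :=
  (∀ p f ts, t.sub p = some (Term.app f ts) →
    ∃ sp, s.sub p = some sp ∧ sp.rootSym = Sum.inl f) ∧
  (∀ p tp, t.sub p = some tp → ∃ sp, s.sub p = some sp ∧ A.runC C tp = A.runC C sp)

/-- Building a binary term `f(t,u)` from a symbol of arity 2. -/
def mkBin {f : F} (h : ar f = 2) (t u : Term F ar V) : Term F ar V :=
  Term.app f (fun i => if (i : ℕ) = 0 then t else u)

/-- `s` satisfies the infinite-instances property in `⟨S,R⟩`. -/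
def InfiniteInstances (R : RRC F ar V Q) (S : Set (Term F ar V)) (s : Term F ar V) :
    Prop :=
  ∃ x, s.occursTwice x ∧
    ∃ φ : ℕ → (V → GTerm F ar),
      (∀ i, R.IsSolution (φ i)) ∧
      (∀ i, s.subst (φ i) ∉ R.lang (S \ {s})) ∧
      (∀ i j, i ≠ j → φ i x ≠ φ j x)

/-- The set of prefixes of a finite set of positions. -/
def prefixes (P : Finset (List ℕ)) : Finset (List ℕ) :=
  P.biUnion (fun p => p.inits.toFinset)

/-! Suppose `sφ = tψ` is a common instance. It has every non-variable position `p` of `t`. If `s` is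
determined at `p` through a constant at a prefix of `p`, that prefix must be `p` itself, because
positions of the instance do not extend below a constant. So `p` is a non-variable position of `s`,
with the same symbol as in `t`. Every other position of `t` is the root or lies just below a
non-variable one, so all positions of `t` are positions of `s`. Finally `(s/p)φ = (t/p)ψ`, and
running the automaton on this instance gives the state of both `s/p` and `t/p`. Hence every term
of `S` with an instance in common with `s` already structurally subsumes `s`. -/

namespace Term

theorem sub_nil (t : Term F ar V) : t.sub [] = some t := by
  cases t <;> rfl

theorem sub_append (t : Term F ar V) (p q : List ℕ) :
    t.sub (p ++ q) = (t.sub p).bind (·.sub q) := by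
  induction p generalizing t with
  | nil => rw [List.nil_append, sub_nil, Option.bind_some]
  | cons i p ih =>
    cases t with
    | var x => rfl
    | app f ts =>
      simp only [List.cons_append, sub]
      split
      · exact ih _
      · rfl

theorem sub_subst {t u : Term F ar V} {p : List ℕ} (φ : V → Term F ar V')
    (h : t.sub p = some u) : (t.subst φ).sub p = some (u.subst φ) := by
  induction p generalizing t with
  | nil =>
    rw [sub_nil, Option.some.injEq] at h
    rw [sub_nil, h]
  | cons i p ih =>
    cases t with
    | var x => cases h
    | app f ts =>
      rw [sub, Option.dite_none_right_eq_some] at h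
      obtain ⟨hi, h⟩ := h
      rw [subst, sub, dif_pos hi]
      exact ih h

theorem isPos_iff_exists {t : Term F ar V} {p : List ℕ} : t.isPos p ↔ ∃ u, t.sub p = some u :=
  Option.ne_none_iff_exists'

theorem isPos_nil (t : Term F ar V) : t.isPos [] :=
  isPos_iff_exists.mpr ⟨t, sub_nil t⟩

theorem isPos_app_cons {f : F} {ts : Fin (ar f) → Term F ar V} {i : ℕ} {p : List ℕ} :
    (app f ts).isPos (i :: p) ↔ ∃ h : i < ar f, (ts ⟨i, h⟩).isPos p := by
  simp only [isPos_iff_exists, sub, Option.dite_none_right_eq_some]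
  exact exists_comm

theorem isPos_append {t : Term F ar V} {p q : List ℕ} :
    t.isPos (p ++ q) ↔ ∃ u, t.sub p = some u ∧ u.isPos q := by
  simp only [isPos_iff_exists, sub_append, Option.bind_eq_some_iff]
  exact exists_comm.trans (exists_congr fun _ => exists_and_left)

theorem isPos_concat {t : Term F ar V} {p : List ℕ} {i : ℕ} :
    t.isPos (p ++ [i]) ↔ ∃ f ts, t.sub p = some (app f ts) ∧ i < ar f := by
  rw [isPos_append]
  constructor
  · rintro ⟨_ | ⟨f, ts⟩, hu, hi⟩
    · exact absurd rfl hi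
    · obtain ⟨hi, -⟩ := isPos_app_cons.mp hi
      exact ⟨f, ts, hu, hi⟩
  · rintro ⟨f, ts, hu, hi⟩
    exact ⟨app f ts, hu, isPos_app_cons.mpr ⟨hi, isPos_nil _⟩⟩

theorem isNonVarPos_of_determinedAt {s : Term F ar V} {p : List ℕ} (φ : V → Term F ar V')
    (hdet : s.determinedAt p) (hp : (s.subst φ).isPos p) : s.isNonVarPos p := by
  obtain hp' | ⟨p', ⟨q, rfl⟩, f, ts, hs, hf⟩ := hdet
  · exact hp'
  obtain ⟨u, hu, hq⟩ := isPos_append.mp hp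
  obtain rfl : (app f ts).subst φ = u := Option.some.inj ((sub_subst φ hs).symm.trans hu)
  cases q with
  | nil => exact ⟨f, ts, by rw [List.append_nil, hs]⟩
  | cons i q =>
    obtain ⟨hi, -⟩ := isPos_app_cons.mp hq
    omega

section CommonInstance

variable {W : Type} {s : Term F ar V} {t : Term F ar V'} {φ : V → Term F ar W}
  {ψ : V' → Term F ar W}

theorem subst_sub_eq {s' : Term F ar V} {t' : Term F ar V'} {p : List ℕ}
    (h : s.subst φ = t.subst ψ) (hs : s.sub p = some s') (ht : t.sub p = some t') :
    s'.subst φ = t'.subst ψ :=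
  Option.some.inj (by rw [← sub_subst φ hs, ← sub_subst ψ ht, h])

theorem exists_sub_eq_app {p : List ℕ} {f : F} {ts : Fin (ar f) → Term F ar V'}
    (h : s.subst φ = t.subst ψ) (hdet : s.determinedAt p) (ht : t.sub p = some (app f ts)) :
    ∃ ss, s.sub p = some (app f ss) := by
  have hp : (s.subst φ).isPos p := isPos_iff_exists.mpr ⟨_, h ▸ sub_subst ψ ht⟩
  obtain ⟨g, ss, hs⟩ := isNonVarPos_of_determinedAt φ hdet hp
  obtain ⟨rfl, -⟩ := app.inj (subst_sub_eq h hs ht)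
  exact ⟨ss, hs⟩

theorem isPos_of_subst_eq {p : List ℕ} (h : s.subst φ = t.subst ψ)
    (hdet : ∀ p, t.isNonVarPos p → s.determinedAt p) (hp : t.isPos p) : s.isPos p := by
  obtain rfl | ⟨p, i, rfl⟩ := p.eq_nil_or_concat'
  · exact isPos_nil s
  · obtain ⟨f, ts, ht, hi⟩ := isPos_concat.mp hp
    obtain ⟨ss, hs⟩ := exists_sub_eq_app h (hdet p ⟨f, ts, ht⟩) ht
    exact isPos_concat.mpr ⟨f, ss, hs, hi⟩

end CommonInstance

end Term

theorem DTA.runC_subst (A : DTA F ar Q) {C : V → Q} {C' : V' → Q} {φ : V → Term F ar V'}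
    (hφ : ∀ x, A.runC C' (φ x) = some (C x)) (s : Term F ar V) :
    A.runC C' (s.subst φ) = A.runC C s := by
  induction s with
  | var x => exact hφ x
  | app f ts ih => simp only [Term.subst, DTA.runC, ih]

theorem structSub_of_subst_eq {A : DTA F ar Q} {C : V → Q} {C' : V' → Q} {s t : Term F ar V}
    {φ ψ : V → Term F ar V'} (hφ : ∀ x, A.runC C' (φ x) = some (C x))
    (hψ : ∀ x, A.runC C' (ψ x) = some (C x))
    (hdet : ∀ p, t.isNonVarPos p → s.determinedAt p) (h : s.subst φ = t.subst ψ) :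
    StructSub A C s t := by
  refine ⟨fun p f ts ht => ?_, fun p t' ht => ?_⟩
  · obtain ⟨ss, hs⟩ := Term.exists_sub_eq_app h (hdet p ⟨f, ts, ht⟩) ht
    exact ⟨_, hs, rfl⟩
  · obtain ⟨s', hs⟩ := Term.isPos_iff_exists.mp <|
      Term.isPos_of_subst_eq h hdet (Term.isPos_iff_exists.mpr ⟨t', ht⟩)
    refine ⟨s', hs, ?_⟩
    rw [← A.runC_subst hψ, ← A.runC_subst hφ, Term.subst_sub_eq h hs ht]

theorem RRC.lang_mono (R : RRC F ar V Q) {S T : Set (Term F ar V)} (h : S ⊆ T) :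
    R.lang S ⊆ R.lang T :=
  fun _ ⟨s, hs, hu⟩ => ⟨s, h hs, hu⟩

theorem restrict_to_subsumers_general (R : RRC F ar V Q) (S : Set (Term F ar V)) (s : Term F ar V)
    (hdet : ∀ t ∈ S, ∀ p, t.isNonVarPos p → s.determinedAt p) :
    (∀ u ∈ R.lang {s}, u ∈ R.lang S → u ∈ R.lang {t | t ∈ S ∧ StructSub R.A R.C s t}) ∧
    R.lang {s} \ R.lang S = R.lang {s} \ R.lang {t | t ∈ S ∧ StructSub R.A R.C s t} := by
  have hsub : ∀ u ∈ R.lang {s}, u ∈ R.lang S →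
      u ∈ R.lang {t | t ∈ S ∧ StructSub R.A R.C s t} := by
    rintro u ⟨_, rfl, φ, hφ, hs⟩ ⟨t, ht, ψ, hψ, hu⟩
    exact ⟨t, ⟨ht, structSub_of_subst_eq hφ.1 hψ.1 (hdet t ht) (hs.symm.trans hu)⟩, ψ, hψ, hu⟩
  refine ⟨hsub, Set.Subset.antisymm ?_ ?_⟩
  · exact Set.sdiff_subset_sdiff_right (R.lang_mono fun _ ht => ht.1)
  · exact fun u ⟨hs, hS⟩ => ⟨hs, fun hu => hS (hsub u hs hu)⟩

/-- if `s` is determined at all non-variable positions of the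
terms in `S`, and `S₃` is the set of terms of `S` that structurally subsume
`s`, then every instance of `⟨{s},R⟩` lying in `L(⟨S,R⟩)` lies in `L(⟨S₃,R⟩)`;
consequently `L(⟨{s},R⟩) − L(⟨S,R⟩) = L(⟨{s},R⟩) − L(⟨S₃,R⟩)`. -/
theorem restrict_to_subsumers {F V Q : Type} {ar : F → ℕ}
    [Fintype F] [Fintype Q] [Fintype V]
    (R : RRC F ar V Q) (S : Finset (Term F ar V)) (s : Term F ar V)
    (hdet : ∀ t ∈ S, ∀ p : List ℕ, Term.isNonVarPos t p → s.determinedAt p) :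
    (∀ u : GTerm F ar, u ∈ R.lang {s} → u ∈ R.lang ↑S →
      u ∈ R.lang {t : Term F ar V | t ∈ S ∧ StructSub R.A R.C s t}) ∧
    R.lang {s} \ R.lang ↑S =
      R.lang {s} \ R.lang {t : Term F ar V | t ∈ S ∧ StructSub R.A R.C s t} :=
  restrict_to_subsumers_general R S s hdet

end RITRC
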